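/- arXiv:2001.07428 — 8 statements merged into one kernel-verified Lean document; each statement's English description precedes it below -/
import Mathlib

section
/- Let A ∈ ℂ^{n×n} be Hermitian J-symmetric, and let x ∈ ℂ^n be an eigenvector of A associated with an eigenvalue λ, i.e. A x = λ x. Then the vector y := J x* (where x* denotes the entrywise complex conjugate of x) is also an eigenvector of A associated with the same eigenvalue λ, i.e. A (J x*) = λ (J x*). -/
/-!
Conjugating `A x = λ x` and using `Aᴴ = A` gives `Aᵀ x* = λ* x*`. The symmetry `J A J⁻¹ = Aᵀ`
together with `J⁻¹ = -J` gives `A J = J Aᵀ`, so `A (J x*) = J (Aᵀ x*) = λ* (J x*)`. Finally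
`λ* = λ`, because a Hermitian matrix has real eigenvalues (and for `x = 0` there is nothing to
prove).
-/

open Matrix

open scoped ComplexOrder in
theorem dotProduct_star_self_ne_zero_of_ne {n : ℕ} {x : Fin n → ℂ} (hx : x ≠ 0) :
    star x ⬝ᵥ x ≠ 0 :=
  fun h => hx (dotProduct_star_self_eq_zero.mp h)

/-- If `A` is Hermitian `J`-symmetric and `A x = λ x`, then `y = J x*` satisfies `A y = λ y`. -/
theorem stmt_0 {n : ℕ} (hn : 0 < n) (J A : Matrix (Fin n) (Fin n) ℂ)
    (hJreal : J.map (starRingEnd ℂ) = J)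
    (hJskew : Jᵀ = -J) (hJorth : Jᵀ = J⁻¹)
    (hAH : Aᴴ = A) (hJsym : J * A * J⁻¹ = Aᵀ)
    (x : Fin n → ℂ) (lam : ℂ) (hx : A.mulVec x = lam • x) :
    A.mulVec (J.mulVec (star x)) = lam • (J.mulVec (star x)) := by
  have hinv : J⁻¹ = -J := hJorth.symm.trans hJskew
  have hstar : star x ᵥ* A = star lam • star x := by
    have h := congrArg star hx
    rwa [star_mulVec, hAH, star_smul] at h
  have hcomm : A * J = J * Aᵀ := by
    by_cases hdet : IsUnit J.det
    · have hJJ : J * -J = 1 := by rw [← hinv]; exact mul_nonsing_inv J hdet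
      have hJJ' : J * J = -1 := by rw [← hJJ]; simp
      rw [← hJsym, hinv, ← mul_assoc, ← mul_assoc, hJJ']
      simp
    · -- For singular `J` the junk value `J⁻¹ = 0` forces `J = 0`.
      have hJ : J = 0 := by
        rw [nonsing_inv_apply_not_isUnit J hdet] at hinv
        exact neg_eq_zero.mp hinv.symm
      simp [hJ]
  by_cases hx0 : x = 0
  · simp [hx0]
  -- Evaluate `x* A x` in two ways.
  have hreal : star lam = lam := by
    have h := dotProduct_mulVec (star x) A x
    rw [hx, hstar, dotProduct_smul, smul_dotProduct, smul_eq_mul, smul_eq_mul] at h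
    exact (mul_right_cancel₀ (dotProduct_star_self_ne_zero_of_ne hx0) h).symm
  rw [mulVec_mulVec, hcomm, ← mulVec_mulVec, mulVec_transpose, hstar, mulVec_smul, hreal]
end

section
/- (Lemma 1, second part) Let v be an arbitrary vector in ℂ^n, let J ∈ ℝ^{n×n} be a real matrix with J^T = -J and J^T = J^{-1}, and let A ∈ ℂ^{n×n} satisfy J A J^{-1} = A^T. Then the vector w := J v* satisfies w^H A v = 0. -/
/-!
Since `J` is real, `wᴴ = (J v)ᵀ`, so `wᴴ A v = vᵀ (Jᵀ A) v`. The symmetry assumption gives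
`J A = Aᵀ J`, which together with `Jᵀ = -J` makes `Jᵀ A` skew-symmetric; the quadratic form of
a skew-symmetric matrix vanishes.
-/

open Matrix

/-- The quadratic form of a skew-symmetric matrix is zero: it equals its own negative. -/
theorem dotProduct_mulVec_self_of_skew {n : ℕ} {M : Matrix (Fin n) (Fin n) ℂ}
    (hM : Mᵀ = -M) (v : Fin n → ℂ) : v ⬝ᵥ M *ᵥ v = 0 := by
  have h : v ⬝ᵥ M *ᵥ v = -(v ⬝ᵥ M *ᵥ v) := by
    calc v ⬝ᵥ M *ᵥ v = v ⬝ᵥ Mᵀ *ᵥ v := by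
          rw [mulVec_transpose, dotProduct_mulVec, dotProduct_comm]
      _ = -(v ⬝ᵥ M *ᵥ v) := by rw [hM, neg_mulVec, dotProduct_neg]
  exact self_eq_neg.mp h

/-- Lemma 1, second part: if `J A J⁻¹ = Aᵀ`, then `w := J v*` satisfies `wᴴ A v = 0`. -/
theorem stmt_2 {n : ℕ} (hn : 0 < n) (J A : Matrix (Fin n) (Fin n) ℂ)
    (hJreal : J.map (starRingEnd ℂ) = J)
    (hJskew : Jᵀ = -J) (hJorth : Jᵀ = J⁻¹)
    (hJsym : J * A * J⁻¹ = Aᵀ)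
    (v : Fin n → ℂ) :
    star (J.mulVec (star v)) ⬝ᵥ A.mulVec v = 0 := by
  have hcomm : J * A = Aᵀ * J := by
    by_cases hu : IsUnit J.det
    · rw [← hJsym, nonsing_inv_mul_cancel_right _ _ hu]
    · -- For singular `J` the convention `J⁻¹ = 0` forces `Jᵀ = 0`.
      have hJ0 : J = 0 := by
        rw [nonsing_inv_apply_not_isUnit _ hu] at hJorth
        exact transpose_eq_zero.mp hJorth
      simp [hJ0]
  have hskew : (Jᵀ * A)ᵀ = -(Jᵀ * A) := by
    rw [transpose_mul, transpose_transpose, ← hcomm, hJskew, neg_mul, neg_neg]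
  have hJH : Jᴴ = Jᵀ := by
    conv_rhs => rw [← hJreal]
    rfl
  rw [star_mulVec, star_star, hJH, ← dotProduct_mulVec, mulVec_mulVec]
  exact dotProduct_mulVec_self_of_skew hskew v
end

section
/- (Lemma 2) Let A ∈ ℂ^{n×n} be Hermitian J-symmetric. Suppose the vectors v_1, …, v_k, v_{k+1} ∈ ℂ^n satisfy A V_k = V_k S_k + v_{k+1} b^T, where V_k = [v_1, …, v_k] ∈ ℂ^{n×k}, S_k ∈ ℝ^{k×k} is a real matrix, and b ∈ ℝ^k is a real vector. Then the vectors w_j := J v_j* (j = 1, …, k+1) satisfy A W_k = W_k S_k + w_{k+1} b^T, where W_k = J V_k* = [w_1, …, w_k]. -/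
open Matrix

/-!
Since `A` is Hermitian, its entrywise conjugate is `Aᵀ`, and `J`-symmetry together with `J² = -1`
gives `A J = J Aᵀ`. Conjugating the decomposition (which fixes the real `S` and `b`) and multiplying
on the left by `J` therefore turns `J (A V)* = J Aᵀ V*` into `A (J V*)`.
-/

/-- The intertwining relation `A J = J Aᵀ`. -/
lemma mul_eq_mul_transpose {n : ℕ} (J A : Matrix (Fin n) (Fin n) ℂ)
    (hJskew : Jᵀ = -J) (hJorth : Jᵀ = J⁻¹) (hJsym : J * A * J⁻¹ = Aᵀ) :
    A * J = J * Aᵀ := by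
  by_cases hdet : IsUnit J.det
  · have hinv : J⁻¹ = -J := hJorth.symm.trans hJskew
    have hJJ : J * J = -1 := by
      have h := Matrix.mul_nonsing_inv J hdet
      rw [hinv, mul_neg] at h
      rw [← h, neg_neg]
    calc A * J = -(J * J) * (A * J) := by rw [hJJ, neg_neg, one_mul]
      _ = J * (J * A * J⁻¹) := by rw [hinv]; noncomm_ring
      _ = J * Aᵀ := by rw [hJsym]
  -- For singular `J` the convention `J⁻¹ = 0` forces `J = 0`.
  · have hJ : J = 0 := by
      rw [Matrix.nonsing_inv_apply_not_isUnit J hdet] at hJorth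
      exact Matrix.transpose_eq_zero.mp hJorth
    simp [hJ]

/-- Lemma 2: if `A V = V S + v_{k+1} bᵀ` with `S`, `b` real, then the vectors
`w_j = J v_j*` satisfy `A W = W S + w_{k+1} bᵀ` with `W = J V*`. -/
theorem stmt_3 {n k : ℕ} (hn : 0 < n) (J A : Matrix (Fin n) (Fin n) ℂ)
    (hJreal : J.map (starRingEnd ℂ) = J)
    (hJskew : Jᵀ = -J) (hJorth : Jᵀ = J⁻¹)
    (hAH : Aᴴ = A) (hJsym : J * A * J⁻¹ = Aᵀ)
    (V : Matrix (Fin n) (Fin k) ℂ) (v : Fin n → ℂ)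
    (S : Matrix (Fin k) (Fin k) ℝ) (b : Fin k → ℝ)
    (hdec : A * V = V * S.map (fun r => (r : ℂ)) +
      Matrix.vecMulVec v (fun j => (b j : ℂ))) :
    A * (J * V.map (starRingEnd ℂ)) =
      (J * V.map (starRingEnd ℂ)) * S.map (fun r => (r : ℂ)) +
        Matrix.vecMulVec (J.mulVec (star v)) (fun j => (b j : ℂ)) := by
  have hAconj : A.map (starRingEnd ℂ) = Aᵀ := by
    conv_rhs => rw [← hAH]
    rfl
  have hconj := congrArg (fun M => J * M.map (starRingEnd ℂ)) hdec
  have hS : (S.map (fun r => (r : ℂ))).map (starRingEnd ℂ) = S.map (fun r => (r : ℂ)) := by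
    ext i j
    simp
  have hvb : (Matrix.vecMulVec v (fun j => (b j : ℂ))).map (starRingEnd ℂ) =
      Matrix.vecMulVec (star v) (fun j => (b j : ℂ)) := by
    ext i j
    simp [Matrix.vecMulVec_apply]
  simp only [Matrix.map_add _ (map_add (starRingEnd ℂ)), Matrix.map_mul, hAconj, hS, hvb,
    Matrix.mul_add, Matrix.mul_vecMulVec] at hconj
  rw [← Matrix.mul_assoc, mul_eq_mul_transpose J A hJskew hJorth hJsym, Matrix.mul_assoc, hconj,
    Matrix.mul_assoc]
end

section
/- (Theorem 1) Let A ∈ ℂ^{n×n} be Hermitian J-symmetric. Suppose V_k = [v_1, …, v_k] ∈ ℂ^{n×k} and v_{k+1} ∈ ℂ^n satisfy A V_k = V_k S_k + v_{k+1} b^T with S_k ∈ ℝ^{k×k} real and b ∈ ℝ^k a nonzero real vector, and set W_k := J V_k*, w_{k+1} := J v_{k+1}*, V_{k+1} := [V_k, v_{k+1}], W_{k+1} := [W_k, w_{k+1}]. If V_k^H W_k = O and V_k^H A W_k = O, then V_{k+1}^H W_{k+1} = O and V_{k+1}^H A W_{k+1} = O. -/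
open Matrix

/-!
Both conclusions say that a bilinear form `(x, y) ↦ x̄ᵀ K ȳ` vanishes on all pairs of columns of
`[V, v]`, with `K = J` for the first and `K = A J` for the second. Both forms are alternating:
`J` is skew by hypothesis, and `J`-symmetry amounts to `A J = J Aᵀ`, so `(A J)ᵀ = -(A J)`. Hence
`v` pairs to zero with itself, and `V` against `w` and `v` against `W` are equivalent.

Taking adjoints in the Krylov relation gives `Vᴴ A y = Sᵀ (Vᴴ y) + (v̄ᵀ y) b`, where realness of
`S` and `b` is used; so if `Vᴴ y = 0`, then `Vᴴ A y = (v̄ᵀ y) b`. For `y` a column of `W` the left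
side vanishes, so `b ≠ 0` forces `v̄ᵀ y = 0`. For `y = w`, now known to satisfy `Vᴴ w = 0` and
`v̄ᵀ w = 0`, it gives `Vᴴ A w = 0`.
-/

lemma skew_pairing {n : ℕ} {K : Matrix (Fin n) (Fin n) ℂ} (hK : Kᵀ = -K) (x y : Fin n → ℂ) :
    x ⬝ᵥ K *ᵥ y = -(y ⬝ᵥ K *ᵥ x) := by
  rw [dotProduct_mulVec, ← mulVec_transpose, hK, neg_mulVec, neg_dotProduct, dotProduct_comm]

lemma skew_pairing_self {n : ℕ} {K : Matrix (Fin n) (Fin n) ℂ} (hK : Kᵀ = -K) (x : Fin n → ℂ) :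
    x ⬝ᵥ K *ᵥ x = 0 :=
  self_eq_neg.mp (skew_pairing hK x x)

/-- For a skew `K`, it suffices to check the pairings among the columns of `V` and those of `V`
against `v`; the remaining ones follow by skewness. -/
lemma extended_pairing {n k : ℕ} {K : Matrix (Fin n) (Fin n) ℂ} (hK : Kᵀ = -K)
    (V : Matrix (Fin n) (Fin k) ℂ) (v : Fin n → ℂ)
    (hVV : ∀ i j, star (Vᵀ i) ⬝ᵥ K *ᵥ star (Vᵀ j) = 0)
    (hVv : ∀ i, star (Vᵀ i) ⬝ᵥ K *ᵥ star v = 0)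
    (P : Matrix (Fin n) (Fin (k + 1)) ℂ) (hP : P = Matrix.of fun i => Fin.snoc (V i) (v i)) :
    Pᴴ * (K * P.map (starRingEnd ℂ)) = 0 := by
  have hc : ∀ j : Fin k, Pᵀ j.castSucc = Vᵀ j := by
    intro j; ext i; simp [hP]
  have hl : Pᵀ (Fin.last k) = v := by
    ext i; simp [hP]
  have key : ∀ i j, star (Pᵀ i) ⬝ᵥ K *ᵥ star (Pᵀ j) = 0 := by
    intro i j
    induction i using Fin.lastCases with
    | last =>
      induction j using Fin.lastCases with
      | last => exact skew_pairing_self hK _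
      | cast j => rw [skew_pairing hK, hc, hl, hVv, neg_zero]
    | cast i =>
      induction j using Fin.lastCases with
      | last => rw [hc, hl, hVv]
      | cast j => rw [hc, hc, hVV]
  ext i j
  exact key i j

/-- If `J` is singular, then `J⁻¹ = 0` in Mathlib, so `Jᵀ = J⁻¹` makes `J` zero; otherwise
`J * J = -1`. The relation holds either way. -/
lemma mul_J_eq {n : ℕ} {J A : Matrix (Fin n) (Fin n) ℂ}
    (hJskew : Jᵀ = -J) (hJorth : Jᵀ = J⁻¹) (hJsym : J * A * J⁻¹ = Aᵀ) :
    A * J = J * Aᵀ := by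
  by_cases hd : IsUnit J.det
  · have hinv : J⁻¹ = -J := hJorth.symm.trans hJskew
    have h1 : J * J = -1 := by
      have := Matrix.mul_nonsing_inv J hd
      rw [hinv, Matrix.mul_neg] at this
      rw [← this, neg_neg]
    rw [← hJsym, hinv, ← Matrix.mul_assoc, ← Matrix.mul_assoc, h1]
    simp
  · have h0 : J = 0 := by
      rw [Matrix.nonsing_inv_apply_not_isUnit J hd] at hJorth
      exact Matrix.transpose_eq_zero.mp hJorth
    simp [h0]

/-- Theorem 1: the `J`-paired Krylov–Schur type bases stay orthogonal and
`A`-orthogonal after one step. -/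
theorem stmt_4 {n k : ℕ} (hn : 0 < n) (J A : Matrix (Fin n) (Fin n) ℂ)
    (hJreal : J.map (starRingEnd ℂ) = J)
    (hJskew : Jᵀ = -J) (hJorth : Jᵀ = J⁻¹)
    (hAH : Aᴴ = A) (hJsym : J * A * J⁻¹ = Aᵀ)
    (V : Matrix (Fin n) (Fin k) ℂ) (v : Fin n → ℂ)
    (S : Matrix (Fin k) (Fin k) ℝ) (b : Fin k → ℝ) (hb : b ≠ 0)
    (hdec : A * V = V * S.map (fun r => (r : ℂ)) +
      Matrix.vecMulVec v (fun j => (b j : ℂ)))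
    (W : Matrix (Fin n) (Fin k) ℂ) (hW : W = J * V.map (starRingEnd ℂ))
    (w : Fin n → ℂ) (hw : w = J.mulVec (star v))
    (horth : Vᴴ * W = 0) (hAorth : Vᴴ * A * W = 0) :
    (Matrix.of fun i => Fin.snoc (V i) (v i))ᴴ *
        (Matrix.of fun i => Fin.snoc (W i) (w i)) = 0 ∧
    (Matrix.of fun i => Fin.snoc (V i) (v i))ᴴ * A *
        (Matrix.of fun i => Fin.snoc (W i) (w i)) = 0 := by
  have hAJ : (A * J)ᵀ = -(A * J) := by
    rw [Matrix.transpose_mul, hJskew, Matrix.neg_mul, mul_J_eq hJskew hJorth hJsym]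
  have hVA : ∀ y, Vᴴ *ᵥ y = 0 → ∀ i, star (Vᵀ i) ⬝ᵥ A *ᵥ y = (b i : ℂ) * (star v ⬝ᵥ y) := by
    have h1 : Vᴴ * A = (S.map (fun r => (r : ℂ)))ᴴ * Vᴴ
        + Matrix.vecMulVec (fun j => (b j : ℂ)) (star v) := by
      have h := congrArg Matrix.conjTranspose hdec
      rw [Matrix.conjTranspose_mul, hAH, Matrix.conjTranspose_add, Matrix.conjTranspose_mul] at h
      rw [h]
      congr 1
      ext i j
      simp [Matrix.vecMulVec_apply, mul_comm]
    intro y hy i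
    have h2 : Vᴴ *ᵥ (A *ᵥ y) = MulOpposite.op (star v ⬝ᵥ y) • (fun j => (b j : ℂ)) := by
      rw [Matrix.mulVec_mulVec, h1, Matrix.add_mulVec, ← Matrix.mulVec_mulVec, hy,
        Matrix.mulVec_zero, zero_add, Matrix.vecMulVec_mulVec]
    exact congrFun h2 i
  have hVV : ∀ i j, star (Vᵀ i) ⬝ᵥ J *ᵥ star (Vᵀ j) = 0 := by
    intro i j
    rw [hW] at horth
    exact congrFun (congrFun horth i) j
  have hVAV : ∀ i j, star (Vᵀ i) ⬝ᵥ A *ᵥ (J *ᵥ star (Vᵀ j)) = 0 := by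
    intro i j
    rw [hW, Matrix.mul_assoc, ← Matrix.mul_assoc A] at hAorth
    rw [Matrix.mulVec_mulVec]
    exact congrFun (congrFun hAorth i) j
  have hVv : ∀ i, star (Vᵀ i) ⬝ᵥ J *ᵥ star v = 0 := by
    intro j
    obtain ⟨i, hi⟩ := Function.ne_iff.mp hb
    have h := hVA (J *ᵥ star (Vᵀ j)) (funext fun i => hVV i j) i
    rw [hVAV] at h
    have hi' : (b i : ℂ) ≠ 0 := by simpa using hi
    rw [skew_pairing hJskew, (mul_eq_zero.mp h.symm).resolve_left hi', neg_zero]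
  have hVAv : ∀ i, star (Vᵀ i) ⬝ᵥ (A * J) *ᵥ star v = 0 := by
    intro i
    rw [← Matrix.mulVec_mulVec, hVA _ (funext hVv), skew_pairing_self hJskew, mul_zero]
  have hQ : (Matrix.of fun i => Fin.snoc (W i) (w i) : Matrix (Fin n) (Fin (k + 1)) ℂ) =
      J * (Matrix.of fun i => Fin.snoc (V i) (v i) :
        Matrix (Fin n) (Fin (k + 1)) ℂ).map (starRingEnd ℂ) := by
    ext i j
    induction j using Fin.lastCases with
    | last => simp [hw, Matrix.mul_apply, Matrix.mulVec, dotProduct]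
    | cast j => simp [hW, Matrix.mul_apply]
  constructor
  · erw [hQ]
    exact extended_pairing hJskew V v hVV hVv _ rfl
  · erw [hQ]
    rw [Matrix.mul_assoc, ← Matrix.mul_assoc A]
    refine extended_pairing hAJ V v (fun i j => ?_) hVAv _ rfl
    rw [← Matrix.mulVec_mulVec, hVAV]
end

section
/- (Corollary 1) Let A ∈ ℂ^{n×n} be Hermitian J-symmetric and let v_1, …, v_{m+1} ∈ ℂ^n, together with real numbers α_1, …, α_m and β_1, …, β_m with each β_j ≠ 0, satisfy the Lanczos three-term recurrence A v_j = β_{j-1} v_{j-1} + α_j v_j + β_j v_{j+1} for j = 1, …, m (with the convention β_0 v_0 = 0). Set V_{m+1} := [v_1, …, v_{m+1}] and W_{m+1} := J V_{m+1}*. Then V_{m+1}^H W_{m+1} = O and V_{m+1}^H A W_{m+1} = O; that is, w_i^H v_j = 0 and w_i^H A v_j = 0 for all 1 ≤ i, j ≤ m+1, where w_i = J v_i*. -/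
open Matrix

/-!
Since `J` is real, `wᵢᴴ y = (J vᵢ) ⬝ᵥ y`, so the claim concerns the bilinear form
`B(x, y) = (J x) ⬝ᵥ y`, which is alternating because `Jᵀ = -J`. The `J`-symmetry of `A` reads
`J A = Aᵀ J`, i.e. `A` is self-adjoint for `B`, and hence so is every polynomial in `A`
(`mul_aeval_eq`). For a polynomial `r`, `B(x, r(A) x) = B(r(A) x, x) = -B(x, r(A) x)`, so this
vanishes; more generally `B(p(A) x, q(A) x) = B(x, (pq)(A) x) = 0`, i.e. every Krylov space of `A`
is isotropic for `B` (`krylov_isotropic`). As the `βⱼ` are nonzero, the recurrence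
places each `vⱼ` in the Krylov space of `v₁` (`lanczos_mem_krylov`).
-/

open Polynomial in
/-- If `A` is self-adjoint for the bilinear form of `J`, so is every polynomial in `A`. -/
lemma mul_aeval_eq {n : ℕ} {J A : Matrix (Fin n) (Fin n) ℂ} (h : J * A = Aᵀ * J) (p : ℂ[X]) :
    J * aeval A p = (aeval A p)ᵀ * J := by
  induction p using Polynomial.induction_on' with
  | add p q hp hq => simp [mul_add, add_mul, hp, hq]
  | monomial k a =>
    have hk : J * A ^ k = (A ^ k)ᵀ * J := by
      rw [transpose_pow]
      exact SemiconjBy.pow_right (show SemiconjBy J A Aᵀ from h) k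
    simp [aeval_monomial, Algebra.algebraMap_eq_smul_one, hk]

open Polynomial in
/-- Krylov spaces of `A` are isotropic for the alternating form of `J`. -/
lemma krylov_isotropic {n : ℕ} {J A : Matrix (Fin n) (Fin n) ℂ} (hJ : Jᵀ = -J)
    (h : J * A = Aᵀ * J) (x : Fin n → ℂ) (p q : ℂ[X]) :
    (J *ᵥ (aeval A p *ᵥ x)) ⬝ᵥ (aeval A q *ᵥ x) = 0 := by
  have self : ∀ (r : ℂ[X]) (y z : Fin n → ℂ),
      (J *ᵥ (aeval A r *ᵥ y)) ⬝ᵥ z = (J *ᵥ y) ⬝ᵥ (aeval A r *ᵥ z) := by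
    intro r y z
    rw [mulVec_mulVec, mul_aeval_eq h, ← mulVec_mulVec, mulVec_transpose, dotProduct_mulVec]
  have skew : ∀ y z : Fin n → ℂ, (J *ᵥ y) ⬝ᵥ z = -((J *ᵥ z) ⬝ᵥ y) := by
    intro y z
    rw [dotProduct_comm, dotProduct_mulVec, ← mulVec_transpose, hJ, neg_mulVec, neg_dotProduct]
  rw [self, mulVec_mulVec, ← map_mul]
  have h1 := self (p * q) x x
  rw [skew] at h1
  exact self_eq_neg.mp h1.symm

open Polynomial in
lemma lanczos_mem_krylov {n m : ℕ} {A : Matrix (Fin n) (Fin n) ℂ}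
    {v : ℕ → Fin n → ℂ} {α β : ℕ → ℝ} (hβ0 : β 0 = 0)
    (hβ : ∀ j, 1 ≤ j → j ≤ m → β j ≠ 0)
    (hrec : ∀ j, 1 ≤ j → j ≤ m →
      A.mulVec (v j) = (β (j - 1) : ℂ) • v (j - 1) + (α j : ℂ) • v j
        + (β j : ℂ) • v (j + 1)) (j : ℕ) (h1 : 1 ≤ j) (hj : j ≤ m + 1) :
    ∃ p : ℂ[X], v j = aeval A p *ᵥ v 1 := by
  induction j using Nat.strong_induction_on with
  | _ j ih =>
    obtain rfl | ⟨k, rfl, hk⟩ : j = 1 ∨ ∃ k, j = k + 1 ∧ 1 ≤ k := by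
      rcases Nat.eq_or_lt_of_le h1 with h | h
      · exact Or.inl h.symm
      · exact Or.inr ⟨j - 1, by omega, by omega⟩
    · exact ⟨1, by simp⟩
    · have hb : (β k : ℂ) ≠ 0 := by exact_mod_cast hβ k hk (by omega)
      obtain ⟨p, hp⟩ := ih k (by omega) hk (by omega)
      -- For `k = 1` the vector `v 0` is arbitrary, but its coefficient `β 0` vanishes.
      obtain ⟨q, hq⟩ : ∃ q : ℂ[X], (β (k - 1) : ℂ) • v (k - 1) = aeval A q *ᵥ v 1 := by
        rcases Nat.eq_or_lt_of_le hk with h | h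
        · exact ⟨0, by simp [← h, hβ0]⟩
        · obtain ⟨q, hq⟩ := ih (k - 1) (by omega) (by omega) (by omega)
          exact ⟨(β (k - 1) : ℂ) • q, by rw [map_smul, smul_mulVec, ← hq]⟩
      refine ⟨(β k : ℂ)⁻¹ • (X * p - q - (α k : ℂ) • p), ?_⟩
      have hr := hrec k hk (by omega)
      have hv : (β k : ℂ) • v (k + 1)
          = A *ᵥ v k - (β (k - 1) : ℂ) • v (k - 1) - (α k : ℂ) • v k := by
        rw [hr]; abel
      rw [map_smul, map_sub, map_sub, map_smul, map_mul, aeval_X, smul_mulVec, sub_mulVec,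
        sub_mulVec, smul_mulVec, ← mulVec_mulVec, ← hp, ← hq, ← hv, inv_smul_smul₀ hb]

/-- Corollary 1: the Lanczos basis `V_{m+1}` (generated by the three-term recurrence)
and its `J`-pair `W_{m+1} = J V_{m+1}*` are orthogonal and `A`-orthogonal:
`w_iᴴ v_j = 0` and `w_iᴴ A v_j = 0` for all `1 ≤ i, j ≤ m+1`, where `w_i = J v_i*`. -/
theorem stmt_5 {n m : ℕ} (hn : 0 < n) (hm : 1 ≤ m)
    (J A : Matrix (Fin n) (Fin n) ℂ)
    (hJreal : J.map (starRingEnd ℂ) = J)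
    (hJskew : Jᵀ = -J) (hJorth : Jᵀ = J⁻¹)
    (hAH : Aᴴ = A) (hJsym : J * A * J⁻¹ = Aᵀ)
    (v : ℕ → Fin n → ℂ) (α β : ℕ → ℝ)
    (hβ0 : β 0 = 0)
    (hβ : ∀ j, 1 ≤ j → j ≤ m → β j ≠ 0)
    (hrec : ∀ j, 1 ≤ j → j ≤ m →
      A.mulVec (v j) = (β (j - 1) : ℂ) • v (j - 1) + (α j : ℂ) • v j
        + (β j : ℂ) • v (j + 1)) :
    ∀ i j, 1 ≤ i → i ≤ m + 1 → 1 ≤ j → j ≤ m + 1 →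
      star (J.mulVec (star (v i))) ⬝ᵥ v j = 0 ∧
      star (J.mulVec (star (v i))) ⬝ᵥ A.mulVec (v j) = 0 := by
  have hJA : J * A = Aᵀ * J := by
    by_cases hu : IsUnit J.det
    · rw [← hJsym, Matrix.mul_assoc, nonsing_inv_mul J hu, Matrix.mul_one]
    -- For singular `J`, the junk value `J⁻¹ = 0` forces `J = 0`.
    · have h0 : J = 0 := by
        rw [nonsing_inv_apply_not_isUnit J hu, hJskew] at hJorth
        exact neg_eq_zero.mp hJorth
      simp [h0]
  have hstar : ∀ x : Fin n → ℂ, star (J *ᵥ star x) = J *ᵥ x := by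
    intro x
    have hJ' : Jᴴ = Jᵀ := by
      conv_rhs => rw [← hJreal]
      rfl
    rw [star_mulVec, star_star, hJ', vecMul_transpose]
  intro i j hi hi' hj hj'
  obtain ⟨p, hp⟩ := lanczos_mem_krylov hβ0 hβ hrec i hi hi'
  obtain ⟨q, hq⟩ := lanczos_mem_krylov hβ0 hβ hrec j hj hj'
  rw [hstar, hp, hq]
  refine ⟨krylov_isotropic hJskew hJA _ p q, ?_⟩
  have h := krylov_isotropic hJskew hJA (v 1) p (Polynomial.X * q)
  rwa [map_mul, Polynomial.aeval_X, ← mulVec_mulVec] at h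
end

section
/- (Corollary 2) Let A ∈ ℂ^{n×n} be Hermitian J-symmetric. Let V_m ∈ ℂ^{n×m}, v_{m+1} ∈ ℂ^n, a real symmetric tridiagonal T_m ∈ ℝ^{m×m} and β_m ∈ ℝ satisfy the Lanczos decomposition A V_m = V_m T_m + β_m v_{m+1} e_m^T, set W_m := J V_m*, w_{m+1} := J v_{m+1}*, and assume [V_m, v_{m+1}]^H [W_m, w_{m+1}] = O and [V_m, v_{m+1}]^H A [W_m, w_{m+1}] = O. Let Z_m ∈ ℝ^{m×m} be a real orthogonal matrix and define U_m := V_m Z_m, Q_m := W_m Z_m, U_{m+1} := [U_m, v_{m+1}], Q_{m+1} := [Q_m, w_{m+1}]. Then U_{m+1}^H Q_{m+1} = O and U_{m+1}^H A Q_{m+1} = O. -/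
/-! Right multiplication of the `m` leading columns by `Z` is right multiplication of the whole
bordered matrix by `borderOne Z = diag(Z, 1)`: `[V Z, v] = [V, v] diag(Z, 1)`. The same factor
serves both bordered bases, so each product in the conclusion is the corresponding hypothesis
multiplied on the left by `diag(Z, 1)ᴴ` and on the right by `diag(Z, 1)`, hence zero. -/


open Matrix

/-- The block diagonal matrix `diag(Z, 1)`, indexed by `Fin (m + 1)` with the extra index last. -/
def borderOne {m : ℕ} (Z : Matrix (Fin m) (Fin m) ℂ) :
    Matrix (Fin (m + 1)) (Fin (m + 1)) ℂ :=
  Matrix.of (Fin.snoc (α := fun _ => Fin (m + 1) → ℂ)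
    (fun i => Fin.snoc (α := fun _ => ℂ) (Z i) 0)
    (Fin.snoc (α := fun _ => ℂ) (fun _ => 0) 1))

lemma snoc_mul_borderOne {n m : ℕ} (V : Matrix (Fin n) (Fin m) ℂ) (v : Fin n → ℂ)
    (Z : Matrix (Fin m) (Fin m) ℂ) :
    (Matrix.of fun i => Fin.snoc (α := fun _ => ℂ) ((V * Z) i) (v i)) =
      (Matrix.of fun i => Fin.snoc (α := fun _ => ℂ) (V i) (v i)) * borderOne Z := by
  ext i j
  rw [Matrix.mul_apply, Fin.sum_univ_castSucc]
  refine Fin.lastCases ?_ (fun j => ?_) j <;> simp [borderOne, Matrix.mul_apply]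

/-- Corollary 2: the Krylov–Schur transformation with a real orthogonal matrix `Z`
preserves the orthogonality and `A`-orthogonality of the `J`-paired bases. -/
theorem stmt_6 {n m : ℕ} (hn : 0 < n) (hm : 0 < m)
    (J A : Matrix (Fin n) (Fin n) ℂ)
    (hJreal : J.map (starRingEnd ℂ) = J)
    (hJskew : Jᵀ = -J) (hJorth : Jᵀ = J⁻¹)
    (hAH : Aᴴ = A) (hJsym : J * A * J⁻¹ = Aᵀ)
    (V : Matrix (Fin n) (Fin m) ℂ) (v : Fin n → ℂ)
    (T : Matrix (Fin m) (Fin m) ℝ) (β : ℝ)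
    (hTsymm : Tᵀ = T)
    (hTtrid : ∀ i j : Fin m, ((i : ℕ) + 1 < (j : ℕ) ∨ (j : ℕ) + 1 < (i : ℕ)) → T i j = 0)
    (hdec : A * V = V * T.map (fun r => (r : ℂ)) +
      Matrix.vecMulVec v (Pi.single (⟨m - 1, by omega⟩ : Fin m) ((β : ℂ))))
    (W : Matrix (Fin n) (Fin m) ℂ) (hW : W = J * V.map (starRingEnd ℂ))
    (w : Fin n → ℂ) (hw : w = J.mulVec (star v))
    (horth : (Matrix.of fun i => Fin.snoc (V i) (v i))ᴴ *
      (Matrix.of fun i => Fin.snoc (W i) (w i)) = 0)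
    (hAorth : (Matrix.of fun i => Fin.snoc (V i) (v i))ᴴ * A *
      (Matrix.of fun i => Fin.snoc (W i) (w i)) = 0)
    (Z : Matrix (Fin m) (Fin m) ℝ) (hZ : Zᵀ * Z = 1)
    (U : Matrix (Fin n) (Fin m) ℂ) (hU : U = V * Z.map (fun r => (r : ℂ)))
    (Q : Matrix (Fin n) (Fin m) ℂ) (hQ : Q = W * Z.map (fun r => (r : ℂ))) :
    (Matrix.of fun i => Fin.snoc (U i) (v i))ᴴ *
        (Matrix.of fun i => Fin.snoc (Q i) (w i)) = 0 ∧
    (Matrix.of fun i => Fin.snoc (U i) (v i))ᴴ * A *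
        (Matrix.of fun i => Fin.snoc (Q i) (w i)) = 0 := by
  subst hU hQ
  rw [snoc_mul_borderOne, snoc_mul_borderOne, Matrix.conjTranspose_mul]
  constructor
  · rw [Matrix.mul_assoc, ← Matrix.mul_assoc _ _ (borderOne _), horth, Matrix.zero_mul,
      Matrix.mul_zero]
  · rw [Matrix.mul_assoc (borderOne _)ᴴ, Matrix.mul_assoc (borderOne _)ᴴ,
      ← Matrix.mul_assoc _ _ (borderOne _), hAorth, Matrix.zero_mul, Matrix.mul_zero]
end

section
/- Let n = 2p be even, let J = [[O, -I],[I, O]] be the canonical skew-symmetric matrix with p×p blocks, and let A ∈ ℂ^{n×n} be Hermitian (A^H = A) with J A J^{-1} = A^T. Then there exist a real diagonal matrix Λ = diag(λ_1, …, λ_p) and matrices X1, X2 ∈ ℂ^{p×p} satisfying X1^H X1 + X2^H X2 = I and X1^T X2 - X2^T X1 = O, such that the block matrix U = [[X1, -X2*],[X2, X1*]] is unitary and A = U · diag(Λ, Λ) · U^H, where diag(Λ, Λ) = [[Λ, O],[O, Λ]]. -/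
open Matrix

/-!
The map `σ (a, b) = (-b*, a*)`, i.e. `v ↦ J v*`, is a quaternionic structure on `ℂ^{2p}`: it is
antilinear, and `(u, w) ↦ ⟪σ u, w⟫` is an alternating bilinear form. The hypotheses on `A` say
that `A` is self-adjoint and commutes with `σ`. Hence an eigenvector `v` with (real) eigenvalue `l`
comes with a second one `σ v`, orthogonal to `v`, for the same eigenvalue.

Consequently one can choose greedily unit eigenvectors `v₁, …, v_p` such that the `v_i` and `σ v_i`
are together orthonormal: while fewer than `p` have been chosen, the orthogonal complement of the
`v_i` and `σ v_i` is nonzero for dimension reasons and `A`-invariant, so it contains an eigenvector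
(`exists_family`). The matrix `U` has the columns `v_i` followed by the columns `σ v_i`.
-/

namespace QuaternionicSpectral

variable {p : ℕ}

/-- The quaternionic structure `(a, b) ↦ (-b*, a*)` on `ℂ^p ⊕ ℂ^p`, given as a plain function
although it is antilinear. -/
def sig (v : Fin p ⊕ Fin p → ℂ) : Fin p ⊕ Fin p → ℂ :=
  Sum.elim (fun i => -star (v (Sum.inr i))) (fun i => star (v (Sum.inl i)))

lemma sig_smul (c : ℂ) (v : Fin p ⊕ Fin p → ℂ) : sig (c • v) = star c • sig v := by
  ext (i | i) <;> simp [sig]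

lemma sig_dot_comm (u w : Fin p ⊕ Fin p → ℂ) :
    star (sig u) ⬝ᵥ w = -(star (sig w) ⬝ᵥ u) := by
  simp only [dotProduct, Fintype.sum_sum_type, sig, Pi.star_apply, Sum.elim_inl, Sum.elim_inr,
    star_neg, star_star, neg_add, ← Finset.sum_neg_distrib]
  rw [add_comm]
  congr 1 <;> exact Finset.sum_congr rfl fun i _ => by ring

lemma sig_dot_self (u : Fin p ⊕ Fin p → ℂ) : star (sig u) ⬝ᵥ u = 0 :=
  self_eq_neg.mp (sig_dot_comm u u)

lemma herm_dot {A : Matrix (Fin p ⊕ Fin p) (Fin p ⊕ Fin p) ℂ} (hA : Aᴴ = A)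
    (u w : Fin p ⊕ Fin p → ℂ) : star u ⬝ᵥ (A *ᵥ w) = star (A *ᵥ u) ⬝ᵥ w := by
  rw [star_mulVec, hA, dotProduct_mulVec]

lemma star_dot_comm (u w : Fin p ⊕ Fin p → ℂ) : star (star u ⬝ᵥ w) = star w ⬝ᵥ u := by
  rw [star_dotProduct, star_star]

/-- The `J`-symmetry of a Hermitian matrix, entry by entry: the two block columns determine each
other. -/
lemma blocks {A : Matrix (Fin p ⊕ Fin p) (Fin p ⊕ Fin p) ℂ} (hA : Aᴴ = A)
    (hJ : (Matrix.fromBlocks (0 : Matrix (Fin p) (Fin p) ℂ) (-1) 1 0) * A *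
      (Matrix.fromBlocks (0 : Matrix (Fin p) (Fin p) ℂ) (-1) 1 0)⁻¹ = Aᵀ) (i j : Fin p) :
    A (.inr i) (.inr j) = star (A (.inl i) (.inl j)) ∧
      A (.inl i) (.inr j) = -star (A (.inr i) (.inl j)) := by
  have hinv : (Matrix.fromBlocks (0 : Matrix (Fin p) (Fin p) ℂ) (-1) 1 0)⁻¹ =
      Matrix.fromBlocks 0 (1 : Matrix (Fin p) (Fin p) ℂ)
        (-1 : Matrix (Fin p) (Fin p) ℂ) 0 := by
    apply Matrix.inv_eq_right_inv
    simp [fromBlocks_multiply]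
  rw [hinv, ← fromBlocks_toBlocks A, fromBlocks_multiply, fromBlocks_multiply,
    fromBlocks_transpose, fromBlocks_inj] at hJ
  obtain ⟨h1, -, h3, -⟩ := hJ
  have hs : ∀ a b, star (A a b) = A b a := fun a b => congrFun (congrFun hA b) a
  have h1' := congrFun (congrFun h1 i) j
  have h3' := congrFun (congrFun h3 i) j
  simp [toBlocks₁₁, toBlocks₁₂, toBlocks₂₂] at h1' h3'
  rw [hs, hs]
  exact ⟨h1', by rw [← h3', neg_neg]⟩

lemma mulVec_sig {A : Matrix (Fin p ⊕ Fin p) (Fin p ⊕ Fin p) ℂ} (hA : Aᴴ = A)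
    (hJ : (Matrix.fromBlocks (0 : Matrix (Fin p) (Fin p) ℂ) (-1) 1 0) * A *
      (Matrix.fromBlocks (0 : Matrix (Fin p) (Fin p) ℂ) (-1) 1 0)⁻¹ = Aᵀ)
    (v : Fin p ⊕ Fin p → ℂ) : A *ᵥ sig v = sig (A *ᵥ v) := by
  have hb := blocks hA hJ
  ext (i | i)
  · simp only [mulVec, dotProduct, Fintype.sum_sum_type, sig, Sum.elim_inl, Sum.elim_inr,
      (hb _ _).1, (hb _ _).2, star_add, star_sum, star_mul', star_star, neg_add,
      ← Finset.sum_neg_distrib]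
    rw [add_comm]
    congr 1 <;> exact Finset.sum_congr rfl fun i _ => by ring
  · simp only [mulVec, dotProduct, Fintype.sum_sum_type, sig, Sum.elim_inl, Sum.elim_inr,
      (hb _ _).1, (hb _ _).2, star_add, star_sum, star_mul', star_star, star_neg]
    rw [add_comm]
    congr 1
    exact Finset.sum_congr rfl fun i _ => by ring

open scoped ComplexOrder in
/-- As long as `k < p`, the orthogonal complement of `v_i`, `σ v_i` (`i < k`) contains a unit
eigenvector of `A`, provided the `v_i` are themselves eigenvectors. -/
lemma exists_next {A : Matrix (Fin p ⊕ Fin p) (Fin p ⊕ Fin p) ℂ} (hA : Aᴴ = A)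
    (hσ : ∀ v, A *ᵥ sig v = sig (A *ᵥ v)) {k : ℕ} (hk : k < p)
    (v : Fin k → Fin p ⊕ Fin p → ℂ) (l : Fin k → ℝ) (hv : ∀ i, A *ᵥ v i = (l i : ℂ) • v i) :
    ∃ (x : Fin p ⊕ Fin p → ℂ) (m : ℝ), star x ⬝ᵥ x = 1 ∧ A *ᵥ x = (m : ℂ) • x ∧
      (∀ i, star (v i) ⬝ᵥ x = 0) ∧ ∀ i, star (sig (v i)) ⬝ᵥ x = 0 := by
  let M : Matrix (Fin k ⊕ Fin k) (Fin p ⊕ Fin p) ℂ :=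
    Matrix.of (Sum.elim (fun i => star (v i)) (fun i => star (sig (v i))))
  let S := LinearMap.ker M.mulVecLin
  have hS : ∀ x, x ∈ S ↔ (∀ i, star (v i) ⬝ᵥ x = 0) ∧ ∀ i, star (sig (v i)) ⬝ᵥ x = 0 := by
    intro x
    rw [LinearMap.mem_ker, mulVecLin_apply, funext_iff, Sum.forall]
    rfl
  have hne : S ≠ ⊥ := LinearMap.ker_ne_bot_of_finrank_lt (by simp; omega)
  have hinv : ∀ x ∈ S, A.mulVecLin x ∈ S := by
    intro x hx
    rw [hS] at hx ⊢
    simp only [mulVecLin_apply, herm_dot hA, hσ, hv, sig_smul, star_smul, smul_dotProduct, hx.1,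
      hx.2, smul_zero, implies_true, and_self]
  have : Nontrivial S := Submodule.nontrivial_iff_ne_bot.mpr hne
  obtain ⟨μ, hμ⟩ := Module.End.exists_eigenvalue (A.mulVecLin.restrict hinv)
  obtain ⟨y, hy⟩ := hμ.exists_hasEigenvector
  have hy0 : (y : Fin p ⊕ Fin p → ℂ) ≠ 0 := fun h => hy.2 (Subtype.ext h)
  have hAy : A *ᵥ (y : Fin p ⊕ Fin p → ℂ) = μ • (y : Fin p ⊕ Fin p → ℂ) :=
    congrArg Subtype.val hy.apply_eq_smul
  have hyS := (hS y).1 y.2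
  generalize (y : Fin p ⊕ Fin p → ℂ) = z at hy0 hAy hyS
  have hz0 : star z ⬝ᵥ z ≠ 0 := fun h => hy0 (dotProduct_star_self_eq_zero.mp h)
  have hμr : star μ = μ := by
    have := herm_dot hA z z
    rw [hAy, star_smul, dotProduct_smul, smul_dotProduct] at this
    exact (mul_right_cancel₀ hz0 this).symm
  obtain ⟨m, rfl⟩ := Complex.conj_eq_iff_real.mp hμr
  have hpos : 0 ≤ star z ⬝ᵥ z := dotProduct_star_self_nonneg z
  obtain ⟨r, hr⟩ : ∃ r : ℝ, star z ⬝ᵥ z = r :=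
    ⟨_, (Complex.conj_eq_iff_re.mp (star_dot_comm z z)).symm⟩
  rw [hr] at hpos hz0
  have hr0 : 0 < r := lt_of_le_of_ne (by exact_mod_cast hpos) (by
    rintro rfl
    simp at hz0)
  refine ⟨(((√r)⁻¹ : ℝ) : ℂ) • z, m, ?_, ?_, ?_, ?_⟩
  · rw [star_smul, dotProduct_smul, smul_dotProduct, hr]
    have : (√r)⁻¹ * ((√r)⁻¹ * r) = 1 := by
      rw [← mul_assoc, ← mul_inv, Real.mul_self_sqrt hr0.le, inv_mul_cancel₀ hr0.ne']
    simp only [smul_eq_mul, Complex.star_def, Complex.conj_ofReal]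
    exact_mod_cast this
  · rw [mulVec_smul, hAy, smul_comm]
  · intro i
    rw [dotProduct_smul, hyS.1, smul_zero]
  · intro i
    rw [dotProduct_smul, hyS.2, smul_zero]

/-- Up to `p` eigenvectors `v_i` can be chosen such that the `v_i` and `σ v_i` are together
orthonormal. Orthogonality among the `σ v_i` is not recorded, since it follows from that among
the `v_i`. -/
lemma exists_family {A : Matrix (Fin p ⊕ Fin p) (Fin p ⊕ Fin p) ℂ} (hA : Aᴴ = A)
    (hσ : ∀ v, A *ᵥ sig v = sig (A *ᵥ v)) (k : ℕ) (hk : k ≤ p) :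
    ∃ (v : Fin k → Fin p ⊕ Fin p → ℂ) (l : Fin k → ℝ), (∀ i, A *ᵥ v i = (l i : ℂ) • v i) ∧
      (∀ i j, star (v i) ⬝ᵥ v j = if i = j then 1 else 0) ∧
      ∀ i j, star (sig (v i)) ⬝ᵥ v j = 0 := by
  induction k with
  | zero => exact ⟨fun i => i.elim0, fun i => i.elim0, fun i => i.elim0, fun i => i.elim0,
      fun i => i.elim0⟩
  | succ k ih =>
    obtain ⟨v, l, hv, h1, h2⟩ := ih (by omega)
    obtain ⟨x, m, hx, hAx, h3, h4⟩ := exists_next hA hσ (by omega) v l hv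
    refine ⟨Fin.cons x v, Fin.cons m l, ?_, ?_, ?_⟩
    · intro i
      cases i using Fin.cases <;> simp [hAx, hv]
    · intro i j
      cases i using Fin.cases with
      | zero =>
        cases j using Fin.cases with
        | zero => simp [hx]
        | succ j =>
          have := star_dot_comm (v j) x
          rw [h3, star_zero] at this
          simp [← this, (Fin.succ_ne_zero j).symm]
      | succ i => cases j using Fin.cases <;> simp [h1, h3]
    · intro i j
      cases i using Fin.cases with
      | zero =>
        cases j using Fin.cases with
        | zero => simp [sig_dot_self]
        | succ j => simp [sig_dot_comm x, h4]
      | succ i => cases j using Fin.cases <;> simp [h2, h4]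

end QuaternionicSpectral

open QuaternionicSpectral in
/-- Structured spectral decomposition of a Hermitian `J`-symmetric matrix for the
canonical `J`: `A = U · diag(Λ, Λ) · Uᴴ` with `U = [[X1, -X2*],[X2, X1*]]` unitary,
`X1ᴴX1 + X2ᴴX2 = I` and `X1ᵀX2 - X2ᵀX1 = 0`. -/
theorem stmt_12 {p : ℕ} (hp : 0 < p)
    (A : Matrix (Fin p ⊕ Fin p) (Fin p ⊕ Fin p) ℂ)
    (hAH : Aᴴ = A)
    (hJsym : (Matrix.fromBlocks (0 : Matrix (Fin p) (Fin p) ℂ) (-1) 1 0) * A *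
      (Matrix.fromBlocks (0 : Matrix (Fin p) (Fin p) ℂ) (-1) 1 0)⁻¹ = Aᵀ) :
    ∃ (Λ : Fin p → ℝ) (X1 X2 : Matrix (Fin p) (Fin p) ℂ),
      X1ᴴ * X1 + X2ᴴ * X2 = 1 ∧
      X1ᵀ * X2 - X2ᵀ * X1 = 0 ∧
      (Matrix.fromBlocks X1 (-(X2.map (starRingEnd ℂ))) X2 (X1.map (starRingEnd ℂ)))ᴴ *
        (Matrix.fromBlocks X1 (-(X2.map (starRingEnd ℂ))) X2 (X1.map (starRingEnd ℂ))) = 1 ∧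
      A = (Matrix.fromBlocks X1 (-(X2.map (starRingEnd ℂ))) X2 (X1.map (starRingEnd ℂ))) *
            (Matrix.fromBlocks (Matrix.diagonal fun i => (Λ i : ℂ)) 0 0
              (Matrix.diagonal fun i => (Λ i : ℂ))) *
            (Matrix.fromBlocks X1 (-(X2.map (starRingEnd ℂ))) X2 (X1.map (starRingEnd ℂ)))ᴴ := by
  have hσ := mulVec_sig hAH hJsym
  obtain ⟨v, l, hv, h1, h2⟩ := exists_family hAH hσ p le_rfl
  let X1 : Matrix (Fin p) (Fin p) ℂ := Matrix.of fun a i => v i (.inl a)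
  let X2 : Matrix (Fin p) (Fin p) ℂ := Matrix.of fun a i => v i (.inr a)
  have e1 : X1ᴴ * X1 + X2ᴴ * X2 = 1 := by
    ext i j
    rw [one_apply, ← h1 i j]
    simp [X1, X2, mul_apply, dotProduct]
  have e2 : X1ᵀ * X2 - X2ᵀ * X1 = 0 := by
    ext i j
    rw [Matrix.zero_apply, ← h2 i j]
    simp [X1, X2, mul_apply, dotProduct, sig]
    ring
  set U := Matrix.fromBlocks X1 (-(X2.map (starRingEnd ℂ))) X2 (X1.map (starRingEnd ℂ)) with hU
  have hcl : ∀ j, (fun a => U a (.inl j)) = v j := by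
    intro j
    ext (a | a) <;> rfl
  have hcr : ∀ j, (fun a => U a (.inr j)) = sig (v j) := by
    intro j
    ext (a | a) <;> rfl
  have e3 : Uᴴ * U = 1 := by
    -- `⟪σ u, σ w⟫ = ⟪w, u⟫` holds because `σ` is antiunitary.
    have hss : ∀ u w : Fin p ⊕ Fin p → ℂ, star (sig u) ⬝ᵥ sig w = star w ⬝ᵥ u := by
      intro u w
      simp only [dotProduct, Fintype.sum_sum_type, sig, Pi.star_apply, Sum.elim_inl,
        Sum.elim_inr, star_neg, star_star, neg_mul_neg]
      rw [add_comm]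
      congr 1 <;> exact Finset.sum_congr rfl fun i _ => mul_comm _ _
    have key : ∀ i j, (Uᴴ * U) i j = star (fun a => U a i) ⬝ᵥ (fun a => U a j) :=
      fun i j => rfl
    ext (i | i) (j | j)
    · rw [key, hcl, hcl, h1]
      simp [one_apply]
    · rw [key, hcl, hcr, ← star_dot_comm, h2]
      simp
    · rw [key, hcr, hcl, h2]
      simp
    · rw [key, hcr, hcr, hss, h1]
      simp [one_apply, eq_comm]
  have e4 : A * U = U * Matrix.fromBlocks (Matrix.diagonal fun i => (l i : ℂ)) 0 0
      (Matrix.diagonal fun i => (l i : ℂ)) := by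
    have key : ∀ a j, (A * U) a j = (A *ᵥ (fun b => U b j)) a := fun a j => rfl
    rw [fromBlocks_diagonal]
    ext a (j | j)
    · rw [key, hcl, hv, mul_diagonal, ← hcl]
      simp [mul_comm]
    · rw [key, hcr, hσ, hv, sig_smul, mul_diagonal, ← hcr]
      simp [mul_comm]
  refine ⟨l, X1, X2, e1, e2, e3, ?_⟩
  rw [← hU, ← e4, Matrix.mul_assoc, mul_eq_one_comm.mp e3, Matrix.mul_one]
end

section
/- Let γ_1, γ_2, γ_3, γ_4 ∈ ℂ^{4×4}, let C ∈ ℂ^{4×4} be a real matrix with C^T C = I_4 and C γ_μ C^T = -γ_μ^T for μ = 1, …, 4, let V_1, …, V_4 ∈ ℂ^{n×n}, and let κ ∈ ℝ. Define the Wilson–Dirac matrix D := I_{4n} - κ Σ_{μ=1}^{4} [ (I_4 - γ_μ) ⊗ V_μ + (I_4 + γ_μ) ⊗ V_μ^T ], where ⊗ denotes the Kronecker product. Then (C ⊗ I_n) D (C ⊗ I_n)^T = D^T. -/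
/-!
Since `C * Cᵀ = 1`, conjugation by `C` sends `1 - γ μ` to `1 + (γ μ)ᵀ` and `1 + γ μ` to
`1 - (γ μ)ᵀ`. Conjugation by `C ⊗ₖ 1` therefore fixes the identity and turns the two hopping
terms for each `μ` into the transposes of each other.
-/

open Matrix Kronecker

/-- Charge-conjugation symmetry of the Wilson–Dirac matrix:
`(C ⊗ I) D (C ⊗ I)ᵀ = Dᵀ`. -/
theorem stmt_14 {n : ℕ} (hn : 0 < n)
    (γ : Fin 4 → Matrix (Fin 4) (Fin 4) ℂ)
    (C : Matrix (Fin 4) (Fin 4) ℂ)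
    (hCreal : C.map (starRingEnd ℂ) = C)
    (hCorth : Cᵀ * C = 1)
    (hCγ : ∀ μ, C * γ μ * Cᵀ = -(γ μ)ᵀ)
    (V : Fin 4 → Matrix (Fin n) (Fin n) ℂ)
    (κ : ℝ)
    (D : Matrix (Fin 4 × Fin n) (Fin 4 × Fin n) ℂ)
    (hD : D = 1 - (κ : ℂ) •
      ∑ μ : Fin 4, ((1 - γ μ) ⊗ₖ V μ + (1 + γ μ) ⊗ₖ (V μ)ᵀ)) :
    (C ⊗ₖ (1 : Matrix (Fin n) (Fin n) ℂ)) * D * (C ⊗ₖ (1 : Matrix (Fin n) (Fin n) ℂ))ᵀ = Dᵀ := by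
  have hCC : C * Cᵀ = 1 := mul_eq_one_comm.mp hCorth
  have hsub (μ) : C * (1 - γ μ) * Cᵀ = 1 + (γ μ)ᵀ := by
    rw [mul_sub, sub_mul, hCγ, mul_one, hCC, sub_neg_eq_add]
  have hadd (μ) : C * (1 + γ μ) * Cᵀ = 1 - (γ μ)ᵀ := by
    rw [mul_add, add_mul, hCγ, mul_one, hCC, ← sub_eq_add_neg]
  have htr (A : Matrix (Fin 4) (Fin 4) ℂ) (B : Matrix (Fin n) (Fin n) ℂ) :
      (A ⊗ₖ B)ᵀ = Aᵀ ⊗ₖ Bᵀ := (kroneckerMap_transpose _ _ _).symm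
  have hterm (μ) : (C ⊗ₖ (1 : Matrix (Fin n) (Fin n) ℂ)) *
      ((1 - γ μ) ⊗ₖ V μ + (1 + γ μ) ⊗ₖ (V μ)ᵀ) * (Cᵀ ⊗ₖ (1 : Matrix (Fin n) (Fin n) ℂ)) =
      ((1 - γ μ) ⊗ₖ V μ + (1 + γ μ) ⊗ₖ (V μ)ᵀ)ᵀ := by
    rw [mul_add, add_mul]
    simp only [← mul_kronecker_mul, one_mul, mul_one, hsub, hadd, htr, transpose_add,
      transpose_sub, transpose_one, transpose_transpose]
    exact add_comm _ _
  rw [hD, htr, transpose_one, mul_sub, sub_mul, mul_one, ← mul_kronecker_mul, hCC, one_mul,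
    one_kronecker_one, mul_smul_comm, smul_mul_assoc, Finset.mul_sum, Finset.sum_mul,
    transpose_sub, transpose_one, transpose_smul, transpose_sum]
  simp only [hterm]
end
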